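/- dim((Ker L) ⊗ R^n + (Ker M)^N) = n·d_L + (N − d_L)·d_M, where d_L = dim Ker L and d_M = dim Ker M. -/

import Mathlib

/-!
A vector in `ℝ^(N × n)` is viewed as an `N × n` array. For subspaces `K` of `ℝ^N` and `W` of `ℝ^n`,
the arrays with all columns in `K` and all rows in `W` form a copy of `K ⊗ W`, of dimension
`dim K * dim W` (`finrank_colRow`). Then `(Ker L) ⊗ ℝⁿ` is the case `(Ker L, ⊤)`, `(Ker M)^N` is the
case `(⊤, Ker M)`, and their intersection is the case `(Ker L, Ker M)`. The formula follows from
`dim (A + B) + dim (A ∩ B) = dim A + dim B` and `d_L ≤ N`.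
-/

open Matrix Kronecker

/-- `(Ker L) ⊗ ℝⁿ`: the span of Kronecker products `b ⊗ z` with `b ∈ Ker L`. -/
def kerKronSpan {N n : ℕ} (L : Matrix (Fin N) (Fin N) ℝ) :
    Submodule ℝ (Fin N × Fin n → ℝ) :=
  Submodule.span ℝ {x | ∃ (b : Fin N → ℝ) (z : Fin n → ℝ),
    L.mulVec b = 0 ∧ x = fun q => b q.1 * z q.2}

/-- `(Ker M)^N`: block vectors each of whose blocks lies in `Ker M`. -/
def blockKer {N n p : ℕ} (M : Matrix (Fin p) (Fin n) ℝ) :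
    Submodule ℝ (Fin N × Fin n → ℝ) :=
  ⨅ i : Fin N,
    LinearMap.ker (M.mulVecLin ∘ₗ LinearMap.funLeft ℝ ℝ (fun j : Fin n => (i, j)))

/-- The arrays all of whose columns lie in `K` and all of whose rows lie in `W`; as a subspace of
`ℝ^(N × n)` this is `K ⊗ W`. -/
def colRow {N n : ℕ} (K : Submodule ℝ (Fin N → ℝ)) (W : Submodule ℝ (Fin n → ℝ)) :
    Submodule ℝ (Fin N × Fin n → ℝ) where
  carrier := {x | (∀ j, (fun i => x (i, j)) ∈ K) ∧ (∀ i, (fun j => x (i, j)) ∈ W)}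
  zero_mem' := ⟨fun _ => K.zero_mem, fun _ => W.zero_mem⟩
  add_mem' hx hy := ⟨fun j => K.add_mem (hx.1 j) (hy.1 j), fun i => W.add_mem (hx.2 i) (hy.2 i)⟩
  smul_mem' c _ hx := ⟨fun j => K.smul_mem c (hx.1 j), fun i => W.smul_mem c (hx.2 i)⟩

/-- A linear functional applied to every row of an array gives a linear combination of its
columns. -/
lemma rowFunctional_mem {N n : ℕ} {K : Submodule ℝ (Fin N → ℝ)} {x : Fin N × Fin n → ℝ}
    (hx : ∀ j, (fun i => x (i, j)) ∈ K) (f : (Fin n → ℝ) →ₗ[ℝ] ℝ) :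
    (fun i => f (fun j => x (i, j))) ∈ K := by
  have h : (fun i => f (fun j => x (i, j))) =
      ∑ j, f (Pi.single j 1) • (fun i => x (i, j)) := by
    funext i
    rw [LinearMap.pi_apply_eq_sum_univ f]
    simp only [Finset.sum_apply, Pi.smul_apply, smul_eq_mul]
    refine Finset.sum_congr rfl fun j _ => ?_
    rw [mul_comm]
    congr 2
    funext k
    simp [Pi.single_apply, eq_comm]
  rw [h]
  exact K.sum_mem fun j _ => K.smul_mem _ (hx j)

/-- With a basis `w` of `W`, the arrays `∑ k, c k ⊗ w k` with `c k ∈ K` parametrize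
`colRow K W` bijectively. -/
lemma finrank_colRow {N n : ℕ} (K : Submodule ℝ (Fin N → ℝ)) (W : Submodule ℝ (Fin n → ℝ)) :
    Module.finrank ℝ (colRow K W) = Module.finrank ℝ K * Module.finrank ℝ W := by
  let w := Module.finBasis ℝ W
  -- A retraction onto `W` extends the coordinate functionals of `w` to all of `ℝ^n`.
  obtain ⟨g, hg⟩ := LinearMap.exists_leftInverse_of_injective W.subtype W.ker_subtype
  have hgW (v : W) : g v = v := LinearMap.congr_fun hg v
  let F : (Fin (Module.finrank ℝ W) → K) →ₗ[ℝ] colRow K W :=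
    { toFun c := ⟨fun q => ∑ k, (c k : Fin N → ℝ) q.1 * (w k : Fin n → ℝ) q.2, by
        constructor
        · intro j
          convert K.sum_mem (t := Finset.univ)
            (fun k _ => K.smul_mem ((w k : Fin n → ℝ) j) (c k).2) using 1
          funext i
          simp [mul_comm]
        · intro i
          convert W.sum_mem (t := Finset.univ)
            (fun k _ => W.smul_mem ((c k : Fin N → ℝ) i) (w k).2) using 1
          funext j
          simp⟩
      map_add' c d := by
        ext q
        simp [add_mul, Finset.sum_add_distrib]
      map_smul' a c := by
        ext q
        simp [Finset.mul_sum, mul_assoc] }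
  have hF (c : Fin (Module.finrank ℝ W) → K) (i : Fin N) :
      (fun j => (F c : Fin N × Fin n → ℝ) (i, j)) =
        ((∑ k, (c k : Fin N → ℝ) i • w k : W) : Fin n → ℝ) := by
    funext j
    simp [F]
  have hinj : Function.Injective F := by
    intro c d h
    funext k
    ext i
    have h1 : (∑ k, (c k : Fin N → ℝ) i • w k : W) = ∑ k, (d k : Fin N → ℝ) i • w k := by
      apply Subtype.ext
      rw [← hF, ← hF, h]
    have h2 := congrArg (fun v => w.repr v k) h1
    simpa only [w.repr_sum_self] using h2
  have hsurj : Function.Surjective F := by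
    intro x
    refine ⟨fun k => ⟨fun i => w.coord k (g (fun j => x.1 (i, j))),
      rowFunctional_mem x.2.1 (w.coord k ∘ₗ g)⟩, ?_⟩
    ext ⟨i, j⟩
    refine congrFun (g := fun j => x.1 (i, j)) ((hF _ i).trans ?_) j
    have hgi := hgW ⟨_, x.2.2 i⟩
    simp only [Module.Basis.coord_apply]
    rw [w.sum_repr]
    exact congrArg Subtype.val hgi
  rw [← (LinearEquiv.ofBijective F ⟨hinj, hsurj⟩).finrank_eq, Module.finrank_pi_fintype]
  simp [mul_comm]

lemma kerKronSpan_eq_colRow {N n : ℕ} (L : Matrix (Fin N) (Fin N) ℝ) :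
    kerKronSpan (n := n) L = colRow (LinearMap.ker L.mulVecLin) ⊤ := by
  apply le_antisymm
  · refine Submodule.span_le.2 ?_
    rintro _ ⟨b, z, hb, rfl⟩
    refine ⟨fun j => ?_, fun _ => trivial⟩
    have h : (fun i => b i * z j) = z j • b := by
      funext i
      simp [mul_comm]
    change (fun i => b i * z j) ∈ _
    rw [h]
    exact Submodule.smul_mem _ _ hb
  · intro x hx
    -- An array is the sum over `j` of its `j`-th column tensored with the basis vector `e_j`.
    have h : x = ∑ j : Fin n, fun q : Fin N × Fin n =>
        x (q.1, j) * (Pi.single j 1 : Fin n → ℝ) q.2 := by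
      funext ⟨i, k⟩
      simp [Finset.sum_apply, Pi.single_apply]
    rw [h]
    exact Submodule.sum_mem _ fun j _ => Submodule.subset_span
      ⟨fun i => x (i, j), Pi.single j 1, hx.1 j, rfl⟩

lemma blockKer_eq_colRow {N n p : ℕ} (M : Matrix (Fin p) (Fin n) ℝ) :
    blockKer (N := N) M = colRow ⊤ (LinearMap.ker M.mulVecLin) := by
  ext x
  simp only [blockKer, Submodule.mem_iInf]
  exact ⟨fun h => ⟨fun _ => trivial, h⟩, fun h => h.2⟩

lemma colRow_inf {N n : ℕ} (K : Submodule ℝ (Fin N → ℝ)) (W : Submodule ℝ (Fin n → ℝ)) :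
    colRow K ⊤ ⊓ colRow ⊤ W = colRow K W := by
  ext x
  exact ⟨fun h => ⟨h.1.1, h.2.2⟩, fun h => ⟨⟨h.1, fun _ => trivial⟩, ⟨fun _ => trivial, h.2⟩⟩⟩

/-- `dim((Ker L) ⊗ ℝⁿ + (Ker M)^N) = n·d_L + (N − d_L)·d_M`. -/
theorem finrank_kerKronSpan_sup_blockKer {N n p : ℕ}
    (L : Matrix (Fin N) (Fin N) ℝ) (M : Matrix (Fin p) (Fin n) ℝ)
    (dL dM : ℕ) (hdL : dL = Module.finrank ℝ (LinearMap.ker L.mulVecLin))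
    (hdM : dM = Module.finrank ℝ (LinearMap.ker M.mulVecLin)) :
    Module.finrank ℝ (kerKronSpan (n := n) L ⊔ blockKer M : Submodule ℝ (Fin N × Fin n → ℝ)) =
      n * dL + (N - dL) * dM := by
  have hle : dL ≤ N := by
    rw [hdL]
    simpa using Submodule.finrank_le (LinearMap.ker L.mulVecLin)
  rw [kerKronSpan_eq_colRow, blockKer_eq_colRow]
  have h := Submodule.finrank_sup_add_finrank_inf_eq
    (colRow (LinearMap.ker L.mulVecLin) (⊤ : Submodule ℝ (Fin n → ℝ)))
    (colRow (⊤ : Submodule ℝ (Fin N → ℝ)) (LinearMap.ker M.mulVecLin))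
  rw [colRow_inf, finrank_colRow, finrank_colRow, finrank_colRow, finrank_top, finrank_top,
    ← hdL, ← hdM, Module.finrank_fin_fun, Module.finrank_fin_fun] at h
  obtain ⟨k, rfl⟩ := Nat.exists_eq_add_of_le hle
  rw [Nat.add_sub_cancel_left]
  linarith
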